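/- Consider one LAMB step (with β₁ = 0, λ = 0, ε = 0) at a fixed point x ∈ ℝ^d with current second-moment estimate v' ∈ ℝ^d satisfying 0 ≤ v'_j ≤ G² for all coordinates j: draw b i.i.d. samples s_1,…,s_b from P, set g = (1/b) Σ_m ∇ℓ(x, s_m), v_j = β₂ v'_j + (1 − β₂) g_j², r_j = g_j/√(v_j), and define x⁺ blockwise by x⁺^{(i)} = x^{(i)} − η φ(‖x^{(i)}‖) r^{(i)}/‖r^{(i)}‖ (assuming r^{(i)} ≠ 0 almost surely for all blocks i). If every block has dimension d_i = d/h, then E[f(x⁺)] ≤ f(x) − η α_l √(h(1 − β₂)/(G² d)) ‖∇f(x)‖² + η α_u ‖σ̃‖₁/√b + (η² α_u²/2) ‖L‖₁. -/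

import Mathlib

/-!
Since `f` is blockwise smooth, it lies below its blockwise quadratic model at `x`
(`blockwise_descent`). Each block of the LAMB step has norm at most `η αu`, which bounds the
quadratic term by `η² αu² / 2 · ‖L‖₁`.

The linear term is treated one coordinate at a time (`coord_bound`). From
`(1 - β₂) g_j² ≤ v_j ≤ G²` one gets `√v_j · ‖r⁽ⁱ⁾‖ ≤ G √(d / (h (1 - β₂))) = 1 / c` with
`c = √(h (1 - β₂) / (G² d))`. If `∇_j f(x)` and `g_j` agree in sign, the step therefore decreases
the linear model by at least `η αl c · ∇_j f(x) g_j`. If they disagree, the model increases by at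
most `η αu |∇_j f(x)| ≤ η αu |g_j - ∇_j f(x)|`. In both cases the contribution of the coordinate is
at most `-η αl c · ∇_j f(x) g_j + η αu |g_j - ∇_j f(x)|`.

Taking expectations, `E g_j = ∇_j f(x)` and `E |g_j - ∇_j f(x)| ≤ σ̃_j / √b` (`minibatch`), and
summing over the coordinates gives the claim.
-/

open MeasureTheory Finset

/-- The Euclidean norm of the `i`-th block of `u`, where the coordinates of `ℝ^d`
are partitioned into `h` blocks via the block-assignment map `blk`. -/
noncomputable def blockNorm {d h : ℕ} (blk : Fin d → Fin h) (i : Fin h)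
    (u : EuclideanSpace ℝ (Fin d)) : ℝ :=
  Real.sqrt (∑ j ∈ Finset.univ.filter (fun j => blk j = i), u j ^ 2)

/-- Cauchy–Schwarz on a single block. -/
lemma sum_block_mul_le {d h : ℕ} (blk : Fin d → Fin h) (i : Fin h)
    (a c : EuclideanSpace ℝ (Fin d)) :
    ∑ j ∈ Finset.univ.filter (fun j => blk j = i), a j * c j
      ≤ blockNorm blk i a * blockNorm blk i c :=
  Real.sum_mul_le_sqrt_mul_sqrt _ _ _

lemma blockNorm_nonneg {d h : ℕ} (blk : Fin d → Fin h) (i : Fin h)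
    (u : EuclideanSpace ℝ (Fin d)) : 0 ≤ blockNorm blk i u :=
  Real.sqrt_nonneg _

lemma blockNorm_sq {d h : ℕ} (blk : Fin d → Fin h) (i : Fin h)
    (u : EuclideanSpace ℝ (Fin d)) :
    blockNorm blk i u ^ 2 = ∑ j ∈ Finset.univ.filter (fun j => blk j = i), u j ^ 2 :=
  Real.sq_sqrt (Finset.sum_nonneg fun _ _ => sq_nonneg _)

lemma abs_le_blockNorm {d h : ℕ} (blk : Fin d → Fin h) (j : Fin d)
    (u : EuclideanSpace ℝ (Fin d)) : |u j| ≤ blockNorm blk (blk j) u := by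
  apply Real.abs_le_sqrt
  exact Finset.single_le_sum (f := fun j => u j ^ 2) (fun _ _ => sq_nonneg _) (by simp)

lemma blockNorm_smul {d h : ℕ} (blk : Fin d → Fin h) (i : Fin h) {t : ℝ} (ht : 0 ≤ t)
    (u : EuclideanSpace ℝ (Fin d)) : blockNorm blk i (t • u) = t * blockNorm blk i u := by
  simp only [blockNorm, PiLp.smul_apply, smul_eq_mul, mul_pow, ← Finset.mul_sum]
  rw [Real.sqrt_mul (sq_nonneg t), Real.sqrt_sq ht]

/-- The blockwise descent lemma: the quadratic upper model of a blockwise smooth function. It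
follows from the fact that the difference of `f` and its model, restricted to the segment from
`x` to `x + u`, has nonpositive derivative. -/
lemma blockwise_descent {d h : ℕ} (blk : Fin d → Fin h) (f : EuclideanSpace ℝ (Fin d) → ℝ)
    (hfdiff : Differentiable ℝ f) (L : Fin h → ℝ)
    (hsmooth : ∀ (y z : EuclideanSpace ℝ (Fin d)) (i : Fin h),
      blockNorm blk i (gradient f y - gradient f z) ≤ L i * blockNorm blk i (y - z))
    (x u : EuclideanSpace ℝ (Fin d)) :
    f (x + u) ≤ f x + ∑ j, gradient f x j * u j
      + (∑ i, L i * blockNorm blk i u ^ 2) / 2 := by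
  set Q := ∑ i, L i * blockNorm blk i u ^ 2 with hQ
  set I := ∑ j, gradient f x j * u j with hI
  let ψ : ℝ → ℝ := fun t => f (x + t • u) - t * I - t ^ 2 * (Q / 2)
  have hd : ∀ t, HasDerivAt ψ (∑ j, gradient f (x + t • u) j * u j - I - t * Q) t := by
    intro t
    have h1 : HasDerivAt (fun t : ℝ => x + t • u) u t := by
      simpa using ((hasDerivAt_id t).smul_const u).const_add x
    have h2 := (hfdiff (x + t • u)).hasFDerivAt.comp_hasDerivAt t h1
    have h3 : fderiv ℝ f (x + t • u) u = ∑ j, gradient f (x + t • u) j * u j := by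
      rw [← inner_gradient_left, PiLp.inner_apply]
      simp [mul_comm]
    rw [h3] at h2
    have h4 : HasDerivAt (fun t : ℝ => t * I) I t := by
      simpa using (hasDerivAt_id t).mul_const I
    have h5 : HasDerivAt (fun t : ℝ => t ^ 2 * (Q / 2)) (t * Q) t := by
      refine ((hasDerivAt_pow 2 t).mul_const (Q / 2)).congr_deriv ?_
      norm_num
      ring
    exact (h2.sub h4).sub h5
  have hanti : AntitoneOn ψ (Set.Icc 0 1) := by
    apply antitoneOn_of_deriv_nonpos (convex_Icc 0 1)
    · exact fun t _ => (hd t).continuousAt.continuousWithinAt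
    · exact fun t _ => (hd t).differentiableAt.differentiableWithinAt
    · intro t ht
      rw [interior_Icc] at ht
      rw [(hd t).deriv]
      have key : ∑ j, (gradient f (x + t • u) - gradient f x) j * u j ≤ t * Q := by
        rw [← Finset.sum_fiberwise Finset.univ blk, hQ, Finset.mul_sum]
        refine Finset.sum_le_sum fun i _ => ?_
        refine (sum_block_mul_le blk i _ u).trans ?_
        have h1 := hsmooth (x + t • u) x i
        rw [add_sub_cancel_left, blockNorm_smul blk i ht.1.le] at h1
        calc _ ≤ L i * (t * blockNorm blk i u) * blockNorm blk i u :=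
              mul_le_mul_of_nonneg_right h1 (blockNorm_nonneg _ _ _)
          _ = _ := by ring
      simp only [PiLp.sub_apply, sub_mul, Finset.sum_sub_distrib] at key
      linarith
  have := hanti (by simp) (by simp) zero_le_one
  simp only [ψ, one_smul, zero_smul, add_zero] at this
  linarith

/-- The coordinatewise heart of the argument, with `a` the true and `u` the stochastic partial
derivative, `w` the square root of the second-moment estimate, `N` the block norm of the
normalised direction and `p` the scaling factor. If `a` and `u` agree in sign, the step makes
progress proportional to `a * u`; otherwise `|a| ≤ |u - a|`, and the loss is at most `|a|`
times the scaling factor. -/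
lemma coord_bound {a u w G N c p αl αu : ℝ} (hw0 : 0 ≤ w) (hwG : w ≤ G) (hwu : w = 0 → u = 0)
    (hN : |u / w| ≤ N) (hc : 0 ≤ c) (hcN : c * G * N ≤ 1) (hαl : 0 < αl)
    (hp : αl ≤ p) (hp' : p ≤ αu) :
    -(p * (a * (u / w / N))) ≤ -(c * αl * (a * u)) + αu * |u - a| := by
  have hN0 : 0 ≤ N := (abs_nonneg _).trans hN
  rcases le_or_gt 0 (a * u) with hau | hau
  · have h0 : 0 ≤ αu * |u - a| := mul_nonneg (by linarith) (abs_nonneg _)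
    have hp0 : 0 ≤ p := by linarith
    suffices c * αl * (a * u) ≤ p * (a * (u / w / N)) by linarith
    by_cases hu : u = 0
    · simp [hu]
    have hw : 0 < w := lt_of_le_of_ne hw0 fun h => hu (hwu h.symm)
    have hNpos : 0 < N := lt_of_lt_of_le (abs_pos.2 (div_ne_zero hu hw.ne')) hN
    have h1 : c ≤ 1 / (w * N) := by
      rw [le_div_iff₀ (by positivity)]
      calc c * (w * N) ≤ c * (G * N) := by gcongr
        _ ≤ 1 := by linarith
    calc c * αl * (a * u) = αl * (c * (a * u)) := by ring
      _ ≤ p * (1 / (w * N) * (a * u)) := by gcongr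
      _ = p * (a * (u / w / N)) := by field_simp
  · have h1 : |u / w / N| ≤ 1 := by
      rw [abs_div, abs_of_nonneg hN0]
      exact div_le_one_of_le₀ hN hN0
    have h2 : |a| ≤ |u - a| := by
      apply sq_le_sq.1
      nlinarith [sq_nonneg u]
    have h3 : 0 ≤ -(c * αl * (a * u)) := by
      have : 0 ≤ c * αl := by positivity
      nlinarith
    have hαu : 0 ≤ αu := by linarith
    have h4 : -(p * (a * (u / w / N))) ≤ αu * |u - a| := by
      calc -(p * (a * (u / w / N))) ≤ |p * (a * (u / w / N))| := neg_le_abs _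
        _ = p * (|a| * |u / w / N|) := by
          rw [abs_mul, abs_mul, abs_of_pos (hαl.trans_le hp)]
        _ ≤ αu * (|u - a| * 1) := by gcongr
        _ = _ := by ring
    linarith

/-- A minibatch mean of `b` independent bounded samples is unbiased, and its mean absolute
deviation is at most `σ / √b`, by Jensen's inequality and additivity of the variance. -/
lemma minibatch {S : Type*} [MeasurableSpace S] (P : Measure S) [IsProbabilityMeasure P]
    {b : ℕ} (hb : 0 < b) (X : S → ℝ) (hX : Measurable X) {G m σ : ℝ} (hG : ∀ s, |X s| ≤ G)
    (hm : ∫ s, X s ∂P = m) (hσ : 0 ≤ σ) (hvar : ∫ s, (X s - m) ^ 2 ∂P ≤ σ ^ 2)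
    (Y : (Fin b → S) → ℝ) (hY : ∀ ω, Y ω = (b : ℝ)⁻¹ * ∑ k, X (ω k)) :
    ∫ ω, Y ω ∂(Measure.pi fun _ : Fin b => P) = m ∧
    ∫ ω, |Y ω - m| ∂(Measure.pi fun _ : Fin b => P) ≤ σ / Real.sqrt b := by
  have hbR : (0 : ℝ) < b := by exact_mod_cast hb
  have hL : MemLp X 2 P := MemLp.of_bound hX.aestronglyMeasurable G 
    (ae_of_all _ (by simpa using hG))
  have hcomp : ∀ k : Fin b, MemLp (fun ω : Fin b → S => X (ω k)) 2 (Measure.pi fun _ => P) :=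
    fun k => hL.comp_measurePreserving (measurePreserving_eval (fun _ : Fin b => P) k)
  have hYe : Y = fun ω => (b : ℝ)⁻¹ * (∑ k : Fin b, fun ω : Fin b → S => X (ω k)) ω := by
    funext ω; simp [hY]
  have hYL : MemLp Y 2 (Measure.pi fun _ : Fin b => P) := by
    rw [hYe]
    exact (memLp_finsetSum' _ fun k _ => hcomp k).const_mul _
  have hmean : ∫ ω, Y ω ∂(Measure.pi fun _ : Fin b => P) = m := by
    simp only [hY]
    rw [integral_const_mul, integral_finsetSum _ fun k _ => (hcomp k).integrable (by norm_num)]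
    have : ∀ k : Fin b, ∫ ω : Fin b → S, X (ω k) ∂(Measure.pi fun _ => P) = m := by
      intro k
      have hmp := measurePreserving_eval (fun _ : Fin b => P) k
      have h1 := integral_map (μ := Measure.pi fun _ : Fin b => P) (f := X)
        hmp.measurable.aemeasurable hX.aestronglyMeasurable
      rw [hmp.map_eq, hm] at h1
      exact h1.symm
    simp only [this, Finset.sum_const, Finset.card_univ, Fintype.card_fin, nsmul_eq_mul]
    field_simp
  refine ⟨hmean, ?_⟩
  have hvarY : ProbabilityTheory.variance Y (Measure.pi fun _ : Fin b => P) ≤ σ ^ 2 / b := by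
    rw [hYe, ProbabilityTheory.variance_const_mul,
      ProbabilityTheory.variance_sum_pi (X := fun _ => X) fun _ => hL]
    have : ProbabilityTheory.variance X P ≤ σ ^ 2 := by
      rw [ProbabilityTheory.variance_eq_integral hX.aemeasurable, hm]; exact hvar
    simp only [Finset.sum_const, Finset.card_univ, Fintype.card_fin, nsmul_eq_mul]
    calc ((b : ℝ)⁻¹) ^ 2 * (b * ProbabilityTheory.variance X P)
        = ProbabilityTheory.variance X P / b := by field_simp
      _ ≤ σ ^ 2 / b := by gcongr
  have hD : MemLp (fun ω => |Y ω - m|) 2 (Measure.pi fun _ : Fin b => P) :=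
    (hYL.sub (memLp_const m)).norm
  -- `(E|Y - m|)² ≤ E[(Y - m)²]` is the nonnegativity of the variance of `|Y - m|`.
  have hJ := ProbabilityTheory.variance_nonneg (fun ω => |Y ω - m|)
    (Measure.pi fun _ : Fin b => P)
  rw [ProbabilityTheory.variance_eq_sub hD] at hJ
  have hsq : ∫ ω, ((fun ω => |Y ω - m|) ^ 2) ω ∂(Measure.pi fun _ : Fin b => P)
      = ProbabilityTheory.variance Y (Measure.pi fun _ : Fin b => P) := by
    rw [ProbabilityTheory.variance_eq_integral hYL.aemeasurable, hmean]
    simp [sq_abs]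
  rw [hsq] at hJ
  refine (sq_le_sq₀ (integral_nonneg fun _ => abs_nonneg _) (by positivity)).1 ?_
  rw [div_pow, Real.sq_sqrt hbR.le]
  linarith

/-- One LAMB step (β₁ = 0, λ = 0, ε = 0) at a fixed point `x` with second-moment estimate
`v'` satisfying `0 ≤ v'_j ≤ G²`: drawing `b` i.i.d. samples from `P` (product measure on
`Fin b → S`), with `g` the minibatch gradient, `v_j = β₂ v'_j + (1 - β₂) g_j²`,
`r_j = g_j/√(v_j)`, and `x⁺⁽ⁱ⁾ = x⁽ⁱ⁾ - η φ(‖x⁽ⁱ⁾‖) r⁽ⁱ⁾/‖r⁽ⁱ⁾‖`, if every block has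
dimension `d/h` then `E[f x⁺] ≤ f x - η α_l √(h(1-β₂)/(G² d)) ‖∇f x‖²
  + η α_u ‖σ̃‖₁/√b + (η² α_u²/2) ‖L‖₁`. -/
theorem stmt10 {d h : ℕ} (hdvd : h ∣ d) (blk : Fin d → Fin h)
    (hcard : ∀ i : Fin h, (Finset.univ.filter (fun j => blk j = i)).card = d / h)
    {S : Type*} [MeasurableSpace S] (P : Measure S) [IsProbabilityMeasure P]
    (ℓ : EuclideanSpace ℝ (Fin d) → S → ℝ)
    (f : EuclideanSpace ℝ (Fin d) → ℝ)
    (hldiff : ∀ s, Differentiable ℝ (fun y => ℓ y s))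
    (hfdiff : Differentiable ℝ f)
    (hf : ∀ y, f y = ∫ s, ℓ y s ∂P)
    (hlint : ∀ y, Integrable (fun s => ℓ y s) P)
    (hgradmeas : ∀ y, Measurable (fun s => gradient (fun z => ℓ z s) y))
    (hgradint : ∀ y, Integrable (fun s => gradient (fun z => ℓ z s) y) P)
    (hgrad : ∀ y, gradient f y = ∫ s, gradient (fun z => ℓ z s) y ∂P)
    (L : Fin h → ℝ)
    (hsmooth : ∀ (s : S) (y z : EuclideanSpace ℝ (Fin d)) (i : Fin h),
      blockNorm blk i (gradient (fun w => ℓ w s) y - gradient (fun w => ℓ w s) z)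
        ≤ L i * blockNorm blk i (y - z))
    (hsmoothf : ∀ (y z : EuclideanSpace ℝ (Fin d)) (i : Fin h),
      blockNorm blk i (gradient f y - gradient f z) ≤ L i * blockNorm blk i (y - z))
    (G : ℝ) (hG : 0 < G)
    (hGbd : ∀ (y : EuclideanSpace ℝ (Fin d)) (s : S) (j : Fin d),
      |gradient (fun z => ℓ z s) y j| ≤ G)
    (σt : Fin d → ℝ) (hσt : ∀ j, 0 ≤ σt j)
    (hvar : ∀ (y : EuclideanSpace ℝ (Fin d)) (j : Fin d),
      ∫ s, (gradient (fun z => ℓ z s) y j - gradient f y j) ^ 2 ∂P ≤ σt j ^ 2)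
    (φ : ℝ → ℝ) (αl αu : ℝ) (hαl : 0 < αl)
    (hφ : ∀ v, 0 ≤ v → αl ≤ φ v ∧ φ v ≤ αu)
    (β₂ : ℝ) (hβ₂0 : 0 < β₂) (hβ₂1 : β₂ < 1)
    (η : ℝ) (hη : 0 < η)
    (b : ℕ) (hb : 0 < b)
    (x : EuclideanSpace ℝ (Fin d))
    (v' : Fin d → ℝ) (hv' : ∀ j, 0 ≤ v' j ∧ v' j ≤ G ^ 2)
    (g : (Fin b → S) → EuclideanSpace ℝ (Fin d))
    (hg : ∀ ω, g ω = (b : ℝ)⁻¹ • ∑ m : Fin b, gradient (fun z => ℓ z (ω m)) x)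
    (v : (Fin b → S) → Fin d → ℝ)
    (hv : ∀ ω j, v ω j = β₂ * v' j + (1 - β₂) * (g ω j) ^ 2)
    (r : (Fin b → S) → EuclideanSpace ℝ (Fin d))
    (hr : ∀ ω j, r ω j = g ω j / Real.sqrt (v ω j))
    (hrne : ∀ᵐ ω ∂(Measure.pi fun _ : Fin b => P), ∀ i, blockNorm blk i (r ω) ≠ 0)
    (xp : (Fin b → S) → EuclideanSpace ℝ (Fin d))
    (hxp : ∀ ω j, xp ω j
      = x j - η * φ (blockNorm blk (blk j) x) * r ω j / blockNorm blk (blk j) (r ω)) :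
    ∫ ω, f (xp ω) ∂(Measure.pi fun _ : Fin b => P)
      ≤ f x - η * αl * Real.sqrt (h * (1 - β₂) / (G ^ 2 * d)) * ‖gradient f x‖ ^ 2
        + η * αu * (∑ j, σt j) / Real.sqrt b
        + η ^ 2 * αu ^ 2 / 2 * ∑ i, L i := by
  have hαu : 0 < αu := hαl.trans_le ((hφ 0 le_rfl).1.trans (hφ 0 le_rfl).2)
  have hbR : (0 : ℝ) < b := by exact_mod_cast hb
  have h1β : 0 < 1 - β₂ := by linarith
  set μ := Measure.pi fun _ : Fin b => P with hμ
  set c := Real.sqrt (h * (1 - β₂) / (G ^ 2 * d)) with hc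
  have hc0 : 0 ≤ c := Real.sqrt_nonneg _
  -- Nonnegativity of `L i`: some realisation of `r` has a nonzero `i`-th block, which can be
  -- used as a displacement in the smoothness inequality.
  have hL0 : ∀ i, 0 ≤ L i := by
    intro i
    obtain ⟨ω, hω⟩ := hrne.exists
    have h1 := (blockNorm_nonneg _ _ _).trans (hsmoothf (r ω) 0 i)
    rw [sub_zero] at h1
    exact nonneg_of_mul_nonneg_left h1 (lt_of_le_of_ne (blockNorm_nonneg _ _ _) (hω i).symm)
  -- Coordinates of the sample gradients and of their minibatch mean.
  have hXmeas : ∀ j, Measurable fun s => gradient (fun z => ℓ z s) x j := fun j =>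
    (EuclideanSpace.proj (𝕜 := ℝ) j).continuous.measurable.comp (hgradmeas x)
  have hXint : ∀ j, ∫ s, gradient (fun z => ℓ z s) x j ∂P = gradient f x j := by
    intro j
    rw [hgrad x]
    exact (EuclideanSpace.proj (𝕜 := ℝ) j).integral_comp_comm (hgradint x)
  have hgj : ∀ j ω, g ω j = (b : ℝ)⁻¹ * ∑ k, gradient (fun z => ℓ z (ω k)) x j := by
    intro j ω
    rw [hg ω]
    simp
  have hmb := fun j => minibatch P hb _ (hXmeas j) (fun s => hGbd x s j) (hXint j) (hσt j)
    (hvar x j) (fun ω => g ω j) (hgj j)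
  have hgmeas : ∀ j, Measurable fun ω => g ω j := by
    intro j
    simp only [hgj]
    exact (Finset.measurable_sum _ fun k _ =>
      (hXmeas j).comp (measurable_pi_apply k)).const_mul _
  have hgG : ∀ ω j, |g ω j| ≤ G := by
    intro ω j
    rw [hgj, abs_mul, abs_of_pos (inv_pos.2 hbR), inv_mul_le_iff₀ hbR]
    refine (Finset.abs_sum_le_sum_abs _ _).trans ?_
    refine (Finset.sum_le_sum fun k _ => hGbd x (ω k) j).trans ?_
    simp
  -- Since `(1 - β₂) g_j² ≤ v_j`, each `r_j²` is at most `1 / (1 - β₂)`.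
  have hv0 : ∀ ω j, (1 - β₂) * g ω j ^ 2 ≤ v ω j := by
    intro ω j
    rw [hv]
    nlinarith [mul_nonneg hβ₂0.le (hv' j).1]
  have hvG : ∀ ω j, v ω j ≤ G ^ 2 := by
    intro ω j
    have := sq_le_sq' (neg_le_of_abs_le (hgG ω j)) (le_of_abs_le (hgG ω j))
    rw [hv]
    nlinarith [mul_le_mul_of_nonneg_left (hv' j).2 hβ₂0.le,
      mul_le_mul_of_nonneg_left this h1β.le]
  have hvnn : ∀ ω j, 0 ≤ v ω j := fun ω j => (by positivity : _ ≤ _).trans (hv0 ω j)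
  have hr2 : ∀ ω j, r ω j ^ 2 ≤ 1 / (1 - β₂) := by
    intro ω j
    rw [hr, div_pow, Real.sq_sqrt (hvnn ω j)]
    refine div_le_of_le_mul₀ (hvnn ω j) (by positivity) ?_
    rw [one_div, ← div_eq_inv_mul, le_div_iff₀ h1β]
    linarith [hv0 ω j]
  have hcN : ∀ ω (j : Fin d), c * G * blockNorm blk (blk j) (r ω) ≤ 1 := by
    intro ω j
    have hd0 : (0 : ℝ) < d := by exact_mod_cast j.pos
    have hh0 : (0 : ℝ) < h := by exact_mod_cast (blk j).pos
    have h1 : blockNorm blk (blk j) (r ω) ^ 2 ≤ d / h * (1 / (1 - β₂)) := by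
      rw [blockNorm_sq]
      refine (Finset.sum_le_card_nsmul _ _ _ fun k _ => hr2 ω k).trans ?_
      rw [hcard, nsmul_eq_mul, Nat.cast_div hdvd hh0.ne']
    rw [← sq_le_one_iff₀ (mul_nonneg (mul_nonneg hc0 hG.le) (blockNorm_nonneg _ _ _)),
      mul_pow, mul_pow, hc, Real.sq_sqrt (by positivity)]
    calc _ ≤ h * (1 - β₂) / (G ^ 2 * d) * G ^ 2 * (d / h * (1 / (1 - β₂))) := by gcongr
      _ = 1 := by field_simp
  have hp : ∀ i, αl ≤ φ (blockNorm blk i x) ∧ φ (blockNorm blk i x) ≤ αu := fun i =>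
    hφ _ (blockNorm_nonneg _ _ _)
  have hstep : ∀ ω j, (xp ω - x) j
      = -(η * (φ (blockNorm blk (blk j) x) * (r ω j / blockNorm blk (blk j) (r ω)))) := by
    intro ω j
    rw [PiLp.sub_apply, hxp]
    ring
  have hu2 : ∀ ω i, blockNorm blk i (xp ω - x) ^ 2 ≤ η ^ 2 * αu ^ 2 := by
    intro ω i
    have h1 : blockNorm blk i (xp ω - x) ^ 2
        = (η * φ (blockNorm blk i x)) ^ 2
          * (blockNorm blk i (r ω) ^ 2 / blockNorm blk i (r ω) ^ 2) := by
      rw [blockNorm_sq blk i (xp ω - x)]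
      nth_rw 1 [blockNorm_sq blk i (r ω)]
      rw [Finset.sum_div, Finset.mul_sum]
      refine Finset.sum_congr rfl fun j hj => ?_
      rw [hstep, (Finset.mem_filter.1 hj).2]
      ring
    rw [h1, ← mul_pow]
    have h2 : (η * φ (blockNorm blk i x)) ^ 2 ≤ (η * αu) ^ 2 := by
      have := hp i
      have : 0 ≤ φ (blockNorm blk i x) := by linarith
      gcongr
      exact (hp i).2
    calc _ ≤ (η * αu) ^ 2 * 1 := mul_le_mul h2 (div_self_le_one _) (by positivity) (by positivity)
      _ = _ := mul_one _
  have hpt : ∀ ω, f (xp ω) ≤ f x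
      + ∑ j, (-(η * c * αl * gradient f x j) * g ω j + η * αu * |g ω j - gradient f x j|)
      + η ^ 2 * αu ^ 2 / 2 * ∑ i, L i := by
    intro ω
    have h1 := blockwise_descent blk f hfdiff L hsmoothf x (xp ω - x)
    rw [add_sub_cancel] at h1
    have h2 : ∑ j, gradient f x j * (xp ω - x) j
        ≤ ∑ j, (-(η * c * αl * gradient f x j) * g ω j
          + η * αu * |g ω j - gradient f x j|) := by
      refine Finset.sum_le_sum fun j _ => ?_
      have h3 := coord_bound (a := gradient f x j) (u := g ω j) (w := Real.sqrt (v ω j))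
        (G := G) (N := blockNorm blk (blk j) (r ω)) (c := c) (Real.sqrt_nonneg _)
        (Real.sqrt_le_iff.2 ⟨hG.le, hvG ω j⟩)
        (fun h0 => by
          rw [Real.sqrt_eq_zero (hvnn ω j)] at h0
          have := hv0 ω j
          rw [h0] at this
          exact pow_eq_zero_iff two_ne_zero |>.1
            (le_antisymm (nonpos_of_mul_nonpos_right this h1β) (sq_nonneg _)))
        (by rw [← hr]; exact abs_le_blockNorm blk j (r ω)) hc0 (hcN ω j) hαl
        (hp (blk j)).1 (hp (blk j)).2
      rw [← hr] at h3
      rw [hstep]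
      have h4 := mul_le_mul_of_nonneg_left h3 hη.le
      linarith
    have h5 : ∑ i, L i * blockNorm blk i (xp ω - x) ^ 2 ≤ η ^ 2 * αu ^ 2 * ∑ i, L i := by
      rw [Finset.mul_sum]
      refine Finset.sum_le_sum fun i _ => ?_
      rw [mul_comm]
      exact mul_le_mul_of_nonneg_right (hu2 ω i) (hL0 i)
    linarith
  have hgi : ∀ j, Integrable (fun ω => g ω j) μ := fun j =>
    Integrable.of_bound (hgmeas j).aestronglyMeasurable G (ae_of_all _ fun ω => hgG ω j)
  have hai : ∀ j, Integrable (fun ω => |g ω j - gradient f x j|) μ := fun j =>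
    ((hgi j).sub (integrable_const _)).abs
  have hti : ∀ j, Integrable (fun ω => -(η * c * αl * gradient f x j) * g ω j
      + η * αu * |g ω j - gradient f x j|) μ := fun j =>
    ((hgi j).const_mul _).add ((hai j).const_mul _)
  -- `f ∘ xp` is measurable and, because the step length is bounded, bounded; hence integrable.
  have hfi : Integrable (fun ω => f (xp ω)) μ := by
    have hrm : ∀ j, Measurable fun ω => r ω j := by
      intro j
      simp only [hr, hv]
      exact (hgmeas j).div
        ((((hgmeas j).pow_const 2).const_mul (1 - β₂)).const_add (β₂ * v' j)).sqrt
    have hbm : ∀ i, Measurable fun ω => blockNorm blk i (r ω) := by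
      intro i
      unfold blockNorm
      exact (Finset.measurable_sum _ fun j _ => (hrm j).pow_const 2).sqrt
    have hxm : Measurable xp := by
      have h1 : Measurable fun ω => (fun j => xp ω j) := by
        refine measurable_pi_lambda _ fun j => ?_
        simp only [hxp]
        exact ((hrm j).const_mul _ |>.div (hbm _)).const_sub _
      exact (MeasurableEquiv.toLp 2 (Fin d → ℝ)).measurable.comp h1
    obtain ⟨C, hC⟩ := (isCompact_closedBall x
      (Real.sqrt (∑ _i : Fin h, η ^ 2 * αu ^ 2))).exists_bound_of_continuousOn
      hfdiff.continuous.continuousOn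
    refine Integrable.of_bound (hfdiff.continuous.measurable.comp hxm).aestronglyMeasurable C
      (ae_of_all _ fun ω => hC _ ?_)
    rw [Metric.mem_closedBall, dist_eq_norm, EuclideanSpace.norm_eq]
    refine Real.sqrt_le_sqrt ?_
    rw [← Finset.sum_fiberwise Finset.univ blk]
    refine Finset.sum_le_sum fun i _ => ?_
    simp only [Real.norm_eq_abs, sq_abs]
    rw [← blockNorm_sq]
    exact hu2 ω i
  have hnorm : ‖gradient f x‖ ^ 2 = ∑ j, gradient f x j ^ 2 := by
    rw [EuclideanSpace.norm_sq_eq]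
    simp
  have hsi := integrable_finsetSum Finset.univ fun j _ => hti j
  have hci : Integrable (fun ω => f x + ∑ j, (-(η * c * αl * gradient f x j) * g ω j
      + η * αu * |g ω j - gradient f x j|)) μ := (integrable_const _).add hsi
  calc ∫ ω, f (xp ω) ∂μ
      ≤ ∫ ω, (f x
        + ∑ j, (-(η * c * αl * gradient f x j) * g ω j + η * αu * |g ω j - gradient f x j|)
        + η ^ 2 * αu ^ 2 / 2 * ∑ i, L i) ∂μ :=
        integral_mono hfi (hci.add (integrable_const _)) hpt
    _ = f x + ∑ j, (-(η * c * αl * gradient f x j) * gradient f x j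
          + η * αu * ∫ ω, |g ω j - gradient f x j| ∂μ)
        + η ^ 2 * αu ^ 2 / 2 * ∑ i, L i := by
        rw [integral_add hci (integrable_const _),
          integral_add (integrable_const _) hsi, integral_finsetSum _ fun j _ => hti j]
        simp only [integral_const, probReal_univ, one_smul]
        congr 2
        refine Finset.sum_congr rfl fun j _ => ?_
        rw [integral_add ((hgi j).const_mul _) ((hai j).const_mul _), integral_const_mul,
          integral_const_mul, (hmb j).1]
    _ ≤ f x + ∑ j, (-(η * c * αl * gradient f x j) * gradient f x j
          + η * αu * (σt j / Real.sqrt b))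
        + η ^ 2 * αu ^ 2 / 2 * ∑ i, L i := by
        gcongr with j
        exact (hmb j).2
    _ = _ := by
        rw [hnorm, Finset.sum_add_distrib, ← Finset.mul_sum, ← Finset.sum_div, mul_div_assoc]
        have : ∑ j, -(η * c * αl * gradient f x j) * gradient f x j
            = -(η * αl * c * ∑ j, gradient f x j ^ 2) := by
          rw [Finset.mul_sum, ← Finset.sum_neg_distrib]
          exact Finset.sum_congr rfl fun j _ => by ring
        rw [this]
        ring
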